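/- arXiv:2212.13600 — 5 statements merged into one kernel-verified Lean document; each statement's English description precedes it below -/
import Mathlib

section
/- If (A,·_A,[·,·,·]_A) is a ternary F-manifold algebra and (B,·_B) is a commutative associative algebra over K, then the tensor product A⊗B is a ternary F-manifold algebra, where (x1⊗y1)·(x2⊗y2) = (x1·_A x2)⊗(y1·_B y2) and [x1⊗y1, x2⊗y2, x3⊗y3] = [x1,x2,x3]_A ⊗ (y1·_B y2·_B y3) for all xi ∈ A, yi ∈ B. -/
open TensorProduct

/-- The 3-Leibnizator `L(x1,x2,x3,x4) = [x1,x2,x3·x4] − x3·[x1,x2,x4] − [x1,x2,x3]·x4`. -/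
def leib3 {K : Type*} [Field K] {A : Type*} [AddCommGroup A] [Module K A]
    (m : A →ₗ[K] A →ₗ[K] A) (b : A →ₗ[K] A →ₗ[K] A →ₗ[K] A) (x1 x2 x3 x4 : A) : A :=
  b x1 x2 (m x3 x4) - m x3 (b x1 x2 x4) - m (b x1 x2 x3) x4

/-- A ternary F-manifold algebra. -/
structure TernaryFM (K : Type*) [Field K] (A : Type*) [AddCommGroup A] [Module K A] where
  mul : A →ₗ[K] A →ₗ[K] A
  br : A →ₗ[K] A →ₗ[K] A →ₗ[K] A
  mul_comm : ∀ x y, mul x y = mul y x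
  mul_assoc : ∀ x y z, mul (mul x y) z = mul x (mul y z)
  br_skew₁₂ : ∀ x y z, br x y z = - br y x z
  br_skew₂₃ : ∀ x y z, br x y z = - br x z y
  fund : ∀ x1 x2 x3 x4 x5,
    br x1 x2 (br x3 x4 x5) =
      br (br x1 x2 x3) x4 x5 + br x3 (br x1 x2 x4) x5 + br x3 x4 (br x1 x2 x5)
  leib : ∀ x1 x2 x3 x4 x5,
    leib3 mul br (mul x1 x2) x3 x4 x5 =
      mul x1 (leib3 mul br x2 x3 x4 x5) + mul x2 (leib3 mul br x1 x3 x4 x5)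

/-- A commutative associative algebra structure (as a bilinear map). -/
structure CommAssocAlg (K : Type*) [Field K] (B : Type*) [AddCommGroup B] [Module K B] where
  mul : B →ₗ[K] B →ₗ[K] B
  mul_comm : ∀ x y, mul x y = mul y x
  mul_assoc : ∀ x y z, mul (mul x y) z = mul x (mul y z)

/-- A ternary Nambu–Poisson algebra. -/
structure TernaryNP (K : Type*) [Field K] (A : Type*) [AddCommGroup A] [Module K A] where
  mul : A →ₗ[K] A →ₗ[K] A
  br : A →ₗ[K] A →ₗ[K] A →ₗ[K] A
  mul_comm : ∀ x y, mul x y = mul y x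
  mul_assoc : ∀ x y z, mul (mul x y) z = mul x (mul y z)
  br_skew₁₂ : ∀ x y z, br x y z = - br y x z
  br_skew₂₃ : ∀ x y z, br x y z = - br x z y
  fund : ∀ x1 x2 x3 x4 x5,
    br x1 x2 (br x3 x4 x5) =
      br (br x1 x2 x3) x4 x5 + br x3 (br x1 x2 x4) x5 + br x3 x4 (br x1 x2 x5)
  leibniz : ∀ x1 x2 x3 x4,
    br x1 x2 (mul x3 x4) = mul x3 (br x1 x2 x4) + mul (br x1 x2 x3) x4

/-- The binary Leibnizator `L(x,y,z) = [x,y·z] − [x,y]·z − y·[x,z]`. -/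
def leib2 {K : Type*} [Field K] {A : Type*} [AddCommGroup A] [Module K A]
    (m : A →ₗ[K] A →ₗ[K] A) (b : A →ₗ[K] A →ₗ[K] A) (x y z : A) : A :=
  b x (m y z) - m (b x y) z - m y (b x z)

/-- An F-manifold algebra. -/
structure FManifoldAlg (K : Type*) [Field K] (A : Type*) [AddCommGroup A] [Module K A] where
  mul : A →ₗ[K] A →ₗ[K] A
  br : A →ₗ[K] A →ₗ[K] A
  mul_comm : ∀ x y, mul x y = mul y x
  mul_assoc : ∀ x y z, mul (mul x y) z = mul x (mul y z)
  br_skew : ∀ x y, br x y = - br y x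
  jacobi : ∀ x y z, br x (br y z) + br y (br z x) + br z (br x y) = 0
  hm : ∀ x y z w,
    leib2 mul br (mul x y) z w = mul x (leib2 mul br y z w) + mul y (leib2 mul br x z w)

section Rep

variable {K : Type*} [Field K] {A V : Type*} [AddCommGroup A] [Module K A]
  [AddCommGroup V] [Module K V]

/-- Representation of the underlying 3-Lie algebra. -/
def Is3LieRep (T : TernaryFM K A) (ρ : A →ₗ[K] A →ₗ[K] V →ₗ[K] V) : Prop :=
  (∀ x y, ρ x y = - ρ y x) ∧
  (∀ x1 x2 x3 x4,
    ρ x1 x2 ∘ₗ ρ x3 x4 - ρ x3 x4 ∘ₗ ρ x1 x2 = ρ (T.br x1 x2 x3) x4 - ρ (T.br x1 x2 x4) x3) ∧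
  (∀ x1 x2 x3 x4,
    ρ (T.br x1 x2 x3) x4 = ρ x1 x2 ∘ₗ ρ x3 x4 + ρ x2 x3 ∘ₗ ρ x1 x4 + ρ x3 x1 ∘ₗ ρ x2 x4)

/-- Representation of the underlying commutative associative algebra. -/
def IsAssocRep (T : TernaryFM K A) (μ : A →ₗ[K] V →ₗ[K] V) : Prop :=
  ∀ x y, μ (T.mul x y) = μ x ∘ₗ μ y

/-- `L1(x,y,z,u) = ρ(x,y)μ(z)u − μ(z)ρ(x,y)u − μ([x,y,z])u`. -/
def L1 (T : TernaryFM K A) (ρ : A →ₗ[K] A →ₗ[K] V →ₗ[K] V) (μ : A →ₗ[K] V →ₗ[K] V)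
    (x y z : A) (u : V) : V :=
  ρ x y (μ z u) - μ z (ρ x y u) - μ (T.br x y z) u

/-- `L2(x,y,z,u) = μ(z)ρ(x,y)u + μ(y)ρ(x,z)u − ρ(x,y·z)u`. -/
def L2 (T : TernaryFM K A) (ρ : A →ₗ[K] A →ₗ[K] V →ₗ[K] V) (μ : A →ₗ[K] V →ₗ[K] V)
    (x y z : A) (u : V) : V :=
  μ z (ρ x y u) + μ y (ρ x z u) - ρ x (T.mul y z) u

/-- `L3(x,y,z,u) = ρ(x,y)μ(z)u + ρ(x,z)μ(y)u − ρ(x,y·z)u`. -/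
def L3 (T : TernaryFM K A) (ρ : A →ₗ[K] A →ₗ[K] V →ₗ[K] V) (μ : A →ₗ[K] V →ₗ[K] V)
    (x y z : A) (u : V) : V :=
  ρ x y (μ z u) + ρ x z (μ y u) - ρ x (T.mul y z) u

/-- Representation of a ternary F-manifold algebra. -/
def IsFMRep (T : TernaryFM K A) (ρ : A →ₗ[K] A →ₗ[K] V →ₗ[K] V)
    (μ : A →ₗ[K] V →ₗ[K] V) : Prop :=
  Is3LieRep T ρ ∧ IsAssocRep T μ ∧
  (∀ x1 x2 x3 x4 u, L1 T ρ μ (T.mul x1 x2) x3 x4 u =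
      μ x1 (L1 T ρ μ x2 x3 x4 u) + μ x2 (L1 T ρ μ x1 x3 x4 u)) ∧
  (∀ x1 x2 x3 x4 u, L2 T ρ μ (T.mul x1 x2) x3 x4 u =
      μ x1 (L2 T ρ μ x2 x3 x4 u) + μ x2 (L2 T ρ μ x1 x3 x4 u)) ∧
  (∀ x1 x2 x3 x4 u, μ (leib3 T.mul T.br x1 x2 x3 x4) u =
      L2 T ρ μ x2 x3 x4 (μ x1 u) - μ x1 (L2 T ρ μ x2 x3 x4 u))

/-- Relative Rota–Baxter operator on a ternary F-manifold algebra. -/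
def IsRelRB (T : TernaryFM K A) (ρ : A →ₗ[K] A →ₗ[K] V →ₗ[K] V)
    (μ : A →ₗ[K] V →ₗ[K] V) (Tm : V →ₗ[K] A) : Prop :=
  (∀ u v, T.mul (Tm u) (Tm v) = Tm (μ (Tm u) v + μ (Tm v) u)) ∧
  (∀ u v w, T.br (Tm u) (Tm v) (Tm w) =
      Tm (ρ (Tm u) (Tm v) w + ρ (Tm v) (Tm w) u + ρ (Tm w) (Tm u) v))

end Rep

section Pre

variable {K : Type*} [Field K] {A : Type*} [AddCommGroup A] [Module K A]

/-- Cyclic sum bracket `[x,y,z]^C = {x,y,z} + {y,z,x} + {z,x,y}`. -/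
def cbr (t : A →ₗ[K] A →ₗ[K] A →ₗ[K] A) (x y z : A) : A :=
  t x y z + t y z x + t z x y

/-- Symmetrized product `x·y = x⋄y + y⋄x`. -/
def sym (d : A →ₗ[K] A →ₗ[K] A) (x y : A) : A := d x y + d y x

/-- `F1(x1,x2,x3,x4) = {x1,x2,x3⋄x4} − x3⋄{x1,x2,x4} − [x1,x2,x3]⋄x4`. -/
def F1 (d : A →ₗ[K] A →ₗ[K] A) (t : A →ₗ[K] A →ₗ[K] A →ₗ[K] A) (x1 x2 x3 x4 : A) : A :=
  t x1 x2 (d x3 x4) - d x3 (t x1 x2 x4) - d (cbr t x1 x2 x3) x4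

/-- `F2(x1,x2,x3,x4) = x3⋄{x1,x2,x4} + x2⋄{x1,x3,x4} − {x1,x2·x3,x4}`. -/
def F2 (d : A →ₗ[K] A →ₗ[K] A) (t : A →ₗ[K] A →ₗ[K] A →ₗ[K] A) (x1 x2 x3 x4 : A) : A :=
  d x3 (t x1 x2 x4) + d x2 (t x1 x3 x4) - t x1 (sym d x2 x3) x4

/-- The 3-Leibnizator of the sub-adjacent operations. -/
def Lpre (d : A →ₗ[K] A →ₗ[K] A) (t : A →ₗ[K] A →ₗ[K] A →ₗ[K] A) (x1 x2 x3 x4 : A) : A :=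
  cbr t x1 x2 (sym d x3 x4) - sym d x3 (cbr t x1 x2 x4) - sym d (cbr t x1 x2 x3) x4

/-- A 3-pre-Lie algebra. -/
structure ThreePreLie (K : Type*) [Field K] (A : Type*) [AddCommGroup A] [Module K A] where
  tri : A →ₗ[K] A →ₗ[K] A →ₗ[K] A
  tri_skew : ∀ x y z, tri x y z = - tri y x z
  preLie₁ : ∀ x1 x2 x3 x4 x5,
    tri x1 x2 (tri x3 x4 x5) =
      tri (cbr tri x1 x2 x3) x4 x5 + tri x3 (cbr tri x1 x2 x4) x5 + tri x3 x4 (tri x1 x2 x5)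
  preLie₂ : ∀ x1 x2 x3 x4 x5,
    tri (cbr tri x1 x2 x3) x4 x5 =
      tri x1 x2 (tri x3 x4 x5) + tri x2 x3 (tri x1 x4 x5) + tri x3 x1 (tri x2 x4 x5)

/-- A ternary pre-F-manifold algebra. -/
structure TernaryPreFM (K : Type*) [Field K] (A : Type*) [AddCommGroup A] [Module K A] where
  dia : A →ₗ[K] A →ₗ[K] A
  tri : A →ₗ[K] A →ₗ[K] A →ₗ[K] A
  zinbiel : ∀ x y z, dia x (dia y z) = dia (dia y x) z + dia (dia x y) z
  tri_skew : ∀ x y z, tri x y z = - tri y x z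
  preLie₁ : ∀ x1 x2 x3 x4 x5,
    tri x1 x2 (tri x3 x4 x5) =
      tri (cbr tri x1 x2 x3) x4 x5 + tri x3 (cbr tri x1 x2 x4) x5 + tri x3 x4 (tri x1 x2 x5)
  preLie₂ : ∀ x1 x2 x3 x4 x5,
    tri (cbr tri x1 x2 x3) x4 x5 =
      tri x1 x2 (tri x3 x4 x5) + tri x2 x3 (tri x1 x4 x5) + tri x3 x1 (tri x2 x4 x5)
  pf1 : ∀ x1 x2 x3 x4 x5,
    F1 dia tri (sym dia x1 x2) x3 x4 x5 =
      dia x1 (F1 dia tri x2 x3 x4 x5) + dia x2 (F1 dia tri x1 x3 x4 x5)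
  pf2 : ∀ x1 x2 x3 x4 x5,
    F2 dia tri (sym dia x1 x2) x3 x4 x5 =
      dia x1 (F2 dia tri x2 x3 x4 x5) + dia x2 (F2 dia tri x1 x3 x4 x5)
  pf3 : ∀ x1 x2 x3 x4 x5,
    dia (Lpre dia tri x1 x2 x3 x4) x5 =
      F2 dia tri x2 x3 x4 (dia x1 x5) - dia x1 (F2 dia tri x2 x3 x4 x5)

/-- A ternary pre-Nambu–Poisson algebra. -/
structure TernaryPreNP (K : Type*) [Field K] (A : Type*) [AddCommGroup A] [Module K A] where
  dia : A →ₗ[K] A →ₗ[K] A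
  tri : A →ₗ[K] A →ₗ[K] A →ₗ[K] A
  zinbiel : ∀ x y z, dia x (dia y z) = dia (dia y x) z + dia (dia x y) z
  tri_skew : ∀ x y z, tri x y z = - tri y x z
  preLie₁ : ∀ x1 x2 x3 x4 x5,
    tri x1 x2 (tri x3 x4 x5) =
      tri (cbr tri x1 x2 x3) x4 x5 + tri x3 (cbr tri x1 x2 x4) x5 + tri x3 x4 (tri x1 x2 x5)
  preLie₂ : ∀ x1 x2 x3 x4 x5,
    tri (cbr tri x1 x2 x3) x4 x5 =
      tri x1 x2 (tri x3 x4 x5) + tri x2 x3 (tri x1 x4 x5) + tri x3 x1 (tri x2 x4 x5)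
  np1 : ∀ x1 x2 x3 x4,
    tri x1 x2 (dia x3 x4) = dia x3 (tri x1 x2 x4) + dia (cbr tri x1 x2 x3) x4
  np2 : ∀ x1 x2 x3 x4,
    tri x1 (sym dia x2 x3) x4 = dia x3 (tri x1 x2 x4) + dia x2 (tri x1 x3 x4)

end Pre

/-- The coherence map `K(x,y,z,u) = [x,y,z·u] + [x,z,u·y] + [x,u,y·z]`. -/
def kmap {K : Type*} [Field K] {A : Type*} [AddCommGroup A] [Module K A]
    (T : TernaryFM K A) (x y z u : A) : A :=
  T.br x y (T.mul z u) + T.br x z (T.mul u y) + T.br x u (T.mul y z)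

section SD

variable {K : Type*} [Field K] {A V : Type*} [AddCommGroup A] [Module K A]
  [AddCommGroup V] [Module K V]

/-- Semidirect product multiplication on `A × V`. -/
def sdMul (T : TernaryFM K A) (μ : A →ₗ[K] V →ₗ[K] V) (p q : A × V) : A × V :=
  (T.mul p.1 q.1, μ p.1 q.2 + μ q.1 p.2)

/-- Semidirect product ternary bracket on `A × V`. -/
def sdBr (T : TernaryFM K A) (ρ : A →ₗ[K] A →ₗ[K] V →ₗ[K] V) (p q r : A × V) : A × V :=
  (T.br p.1 q.1 r.1, ρ p.1 q.1 r.2 - ρ p.1 r.1 q.2 + ρ q.1 r.1 p.2)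

/-- The Nijenhuis operator `N_T(x+u) = Tu` on `A × V`. -/
def nT (Tm : V →ₗ[K] A) (p : A × V) : A × V := (Tm p.2, 0)

end SD

/-!
Every axiom of a ternary F-manifold algebra is a multilinear identity, so on `A ⊗ B` it suffices to
check it on pure tensors. There each monomial in the `xᵢ ⊗ yᵢ` is the same monomial in the `xᵢ`,
evaluated in `A`, tensored with the product of all the `yᵢ`, which in the commutative associative
algebra `B` depends neither on their order nor on the bracketing. Factoring it out leaves the axiom
of `A`.
-/

theorem multilinearMap_ext_tmul {R ι M N P : Type*} [CommSemiring R] [Finite ι]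
    [AddCommMonoid M] [Module R M] [AddCommMonoid N] [Module R N] [AddCommMonoid P] [Module R P]
    {φ ψ : MultilinearMap R (fun _ : ι ↦ M ⊗[R] N) P}
    (h : ∀ (x : ι → M) (y : ι → N), φ (fun i ↦ x i ⊗ₜ y i) = ψ (fun i ↦ x i ⊗ₜ y i)) :
    φ = ψ := by
  refine MultilinearMap.ext_of_span_eq_top (γ := fun _ : ι ↦ M × N) (g := fun _ p ↦ p.1 ⊗ₜ p.2)
    (fun _ ↦ ?_) fun p ↦ h (fun i ↦ (p i).1) (fun i ↦ (p i).2)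
  rw [← TensorProduct.span_tmul_eq_top]
  congr 1
  ext t
  simp only [Set.mem_range, Prod.exists, Set.mem_ofPred_eq]

section TensorMap₂

variable {R M N M' N' : Type*} [CommSemiring R]
  [AddCommMonoid M] [Module R M] [AddCommMonoid N] [Module R N]
  [AddCommMonoid M'] [Module R M'] [AddCommMonoid N'] [Module R N']

theorem tensorMap₂_comm {f : M →ₗ[R] M →ₗ[R] M'} {g : N →ₗ[R] N →ₗ[R] N'}
    (hf : ∀ x y, f x y = f y x) (hg : ∀ x y, g x y = g y x) (s t : M ⊗[R] N) :
    TensorProduct.map₂ f g s t = TensorProduct.map₂ f g t s := by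
  suffices TensorProduct.map₂ f g = (TensorProduct.map₂ f g).flip from
    LinearMap.congr_fun₂ this s t
  ext x y x' y'
  simp [hf x x', hg y y']

theorem tensorMap₂_assoc {f : M →ₗ[R] M →ₗ[R] M} {g : N →ₗ[R] N →ₗ[R] N}
    (hf : ∀ x y z, f (f x y) z = f x (f y z)) (hg : ∀ x y z, g (g x y) z = g x (g y z))
    (s t u : M ⊗[R] N) :
    TensorProduct.map₂ f g (TensorProduct.map₂ f g s t) u =
      TensorProduct.map₂ f g s (TensorProduct.map₂ f g t u) := by
  set p := TensorProduct.map₂ f g with hp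
  suffices p.compr₂ p = (LinearMap.llcomp R _ _ _).compl₁₂ p p from
    LinearMap.congr_fun (LinearMap.congr_fun₂ this s t) u
  ext x y x' y' x'' y''
  simp [hp, hf, hg]

end TensorMap₂

section TensorMap₃

variable {R M₁ M₂ M₃ M₄ N₁ N₂ N₃ N₄ : Type*} [CommSemiring R]
  [AddCommMonoid M₁] [Module R M₁] [AddCommMonoid M₂] [Module R M₂]
  [AddCommMonoid M₃] [Module R M₃] [AddCommMonoid M₄] [Module R M₄]
  [AddCommMonoid N₁] [Module R N₁] [AddCommMonoid N₂] [Module R N₂]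
  [AddCommMonoid N₃] [Module R N₃] [AddCommMonoid N₄] [Module R N₄]

/-- The tensor product of two trilinear maps, the ternary analogue of `TensorProduct.map₂`. -/
noncomputable def tensorMap₃ (f : M₁ →ₗ[R] M₂ →ₗ[R] M₃ →ₗ[R] M₄)
    (g : N₁ →ₗ[R] N₂ →ₗ[R] N₃ →ₗ[R] N₄) :
    M₁ ⊗[R] N₁ →ₗ[R] M₂ ⊗[R] N₂ →ₗ[R] M₃ ⊗[R] N₃ →ₗ[R] M₄ ⊗[R] N₄ :=
  (TensorProduct.map₂ f g).compr₂ (TensorProduct.homTensorHomMap (RingHom.id R) M₃ N₃ M₄ N₄)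

@[simp]
theorem tensorMap₃_tmul (f : M₁ →ₗ[R] M₂ →ₗ[R] M₃ →ₗ[R] M₄)
    (g : N₁ →ₗ[R] N₂ →ₗ[R] N₃ →ₗ[R] N₄) (x₁ : M₁) (x₂ : M₂) (x₃ : M₃)
    (y₁ : N₁) (y₂ : N₂) (y₃ : N₃) :
    tensorMap₃ f g (x₁ ⊗ₜ y₁) (x₂ ⊗ₜ y₂) (x₃ ⊗ₜ y₃) = f x₁ x₂ x₃ ⊗ₜ g y₁ y₂ y₃ :=
  rfl

end TensorMap₃

section Skew

variable {R M N M' N' P Q : Type*} [CommRing R]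
  [AddCommMonoid M] [Module R M] [AddCommMonoid N] [Module R N]
  [AddCommMonoid M'] [Module R M'] [AddCommMonoid N'] [Module R N']
  [AddCommGroup P] [Module R P] [AddCommMonoid Q] [Module R Q]

theorem tensorMap₃_skew₁₂ {f : M →ₗ[R] M →ₗ[R] M' →ₗ[R] P} {g : N →ₗ[R] N →ₗ[R] N' →ₗ[R] Q}
    (hf : ∀ x y z, f x y z = -f y x z) (hg : ∀ x y z, g x y z = g y x z)
    (s t : M ⊗[R] N) (u : M' ⊗[R] N') :
    tensorMap₃ f g s t u = -tensorMap₃ f g t s u := by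
  suffices tensorMap₃ f g + (tensorMap₃ f g).flip = 0 from
    eq_neg_of_add_eq_zero_left (LinearMap.congr_fun (LinearMap.congr_fun₂ this s t) u)
  ext x y x' y' x'' y''
  simp [hf x x', hg y y', TensorProduct.neg_tmul]

theorem tensorMap₃_skew₂₃ {f : M' →ₗ[R] M →ₗ[R] M →ₗ[R] P} {g : N' →ₗ[R] N →ₗ[R] N →ₗ[R] Q}
    (hf : ∀ x y z, f x y z = -f x z y) (hg : ∀ x y z, g x y z = g x z y)
    (s : M' ⊗[R] N') (t u : M ⊗[R] N) :
    tensorMap₃ f g s t u = -tensorMap₃ f g s u t := by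
  suffices tensorMap₃ f g + LinearMap.lflip.toLinearMap ∘ₗ tensorMap₃ f g = 0 from
    eq_neg_of_add_eq_zero_left (LinearMap.congr_fun (LinearMap.congr_fun₂ this s t) u)
  ext x y x' y' x'' y''
  simp [hf x x', hg y y', TensorProduct.neg_tmul]

end Skew

/-- The defect of the fundamental identity of a ternary bracket, as a multilinear map in the five
arguments (indexed from `0`): it vanishes iff the bracket satisfies the identity. -/
def fundDefect {R A : Type*} [CommRing R] [AddCommGroup A] [Module R A]
    (b : A →ₗ[R] A →ₗ[R] A →ₗ[R] A) : MultilinearMap R (fun _ : Fin 5 ↦ A) A :=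
  MultilinearMap.mk'
    (fun x ↦ b (x 0) (x 1) (b (x 2) (x 3) (x 4)) -
      (b (b (x 0) (x 1) (x 2)) (x 3) (x 4) + b (x 2) (b (x 0) (x 1) (x 3)) (x 4) +
        b (x 2) (x 3) (b (x 0) (x 1) (x 4))))
    (by
      intro x i s t
      fin_cases i <;>
        simp only [Fin.zero_eta, Fin.mk_one, Fin.reduceFinMk, Fin.isValue, Fin.reduceEq, ne_eq,
          not_false_eq_true, Function.update_of_ne, Function.update_self, map_add,
          LinearMap.add_apply] <;>
        abel)
    (by
      intro x i c s
      fin_cases i <;> simp [smul_sub])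

/-- The defect of the compatibility of a ternary bracket with a product, i.e. of `leib3` being a
derivation of the product in its first argument, as a multilinear map in the five arguments
(indexed from `0`). -/
def leibDefect {K A : Type*} [Field K] [AddCommGroup A] [Module K A]
    (m : A →ₗ[K] A →ₗ[K] A) (b : A →ₗ[K] A →ₗ[K] A →ₗ[K] A) :
    MultilinearMap K (fun _ : Fin 5 ↦ A) A :=
  MultilinearMap.mk'
    (fun x ↦ leib3 m b (m (x 0) (x 1)) (x 2) (x 3) (x 4) -
      (m (x 0) (leib3 m b (x 1) (x 2) (x 3) (x 4)) +
        m (x 1) (leib3 m b (x 0) (x 2) (x 3) (x 4))))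
    (by
      intro x i s t
      fin_cases i <;>
        simp only [leib3, Fin.zero_eta, Fin.mk_one, Fin.reduceFinMk, Fin.isValue, Fin.reduceEq,
          ne_eq, not_false_eq_true, Function.update_of_ne, Function.update_self, map_add, map_sub,
          LinearMap.add_apply] <;>
        abel)
    (by
      intro x i c s
      fin_cases i <;> simp [leib3, smul_sub])

namespace CommAssocAlg

variable {K A B : Type*} [Field K] [AddCommGroup A] [Module K A] [AddCommGroup B] [Module K B]

theorem mul_left_comm (MB : CommAssocAlg K B) (x y z : B) :
    MB.mul x (MB.mul y z) = MB.mul y (MB.mul x z) := by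
  rw [← MB.mul_assoc, MB.mul_comm x y, MB.mul_assoc]

/-- The threefold product `(x, y, z) ↦ (x · y) · z` as a trilinear map. -/
def mul₃ (MB : CommAssocAlg K B) : B →ₗ[K] B →ₗ[K] B →ₗ[K] B :=
  MB.mul.compr₂ MB.mul

theorem mul₃_apply (MB : CommAssocAlg K B) (x y z : B) :
    MB.mul₃ x y z = MB.mul (MB.mul x y) z :=
  rfl

theorem mul₃_swap₁₂ (MB : CommAssocAlg K B) (x y z : B) : MB.mul₃ x y z = MB.mul₃ y x z := by
  rw [mul₃_apply, mul₃_apply, MB.mul_comm x y]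

theorem mul₃_swap₂₃ (MB : CommAssocAlg K B) (x y z : B) : MB.mul₃ x y z = MB.mul₃ x z y := by
  rw [mul₃_apply, mul₃_apply, MB.mul_assoc, MB.mul_comm y z, MB.mul_assoc]

theorem fundDefect_tmul (MB : CommAssocAlg K B) (b : A →ₗ[K] A →ₗ[K] A →ₗ[K] A)
    (x : Fin 5 → A) (y : Fin 5 → B) :
    fundDefect (tensorMap₃ b MB.mul₃) (fun i ↦ x i ⊗ₜ y i) =
      fundDefect b x ⊗ₜ MB.mul₃ (y 0) (y 1) (MB.mul₃ (y 2) (y 3) (y 4)) := by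
  simp only [fundDefect, MultilinearMap.mk'_apply, tensorMap₃_tmul, mul₃_apply, MB.mul_assoc,
    MB.mul_left_comm, TensorProduct.sub_tmul, TensorProduct.add_tmul]

theorem fundDefect_tensorMap₃_eq_zero (MB : CommAssocAlg K B) {b : A →ₗ[K] A →ₗ[K] A →ₗ[K] A}
    (hb : fundDefect b = 0) : fundDefect (tensorMap₃ b MB.mul₃) = 0 :=
  multilinearMap_ext_tmul fun x y ↦ by simp [MB.fundDefect_tmul, hb]

theorem leib3_tmul (MB : CommAssocAlg K B) (m : A →ₗ[K] A →ₗ[K] A)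
    (b : A →ₗ[K] A →ₗ[K] A →ₗ[K] A) (x₁ x₂ x₃ x₄ : A) (y₁ y₂ y₃ y₄ : B) :
    leib3 (TensorProduct.map₂ m MB.mul) (tensorMap₃ b MB.mul₃)
        (x₁ ⊗ₜ y₁) (x₂ ⊗ₜ y₂) (x₃ ⊗ₜ y₃) (x₄ ⊗ₜ y₄) =
      leib3 m b x₁ x₂ x₃ x₄ ⊗ₜ MB.mul₃ y₁ y₂ (MB.mul y₃ y₄) := by
  simp only [leib3, TensorProduct.map₂_apply_tmul, TensorProduct.map_tmul, tensorMap₃_tmul,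
    mul₃_apply, MB.mul_assoc, MB.mul_left_comm, TensorProduct.sub_tmul]

theorem leibDefect_tmul (MB : CommAssocAlg K B) (m : A →ₗ[K] A →ₗ[K] A)
    (b : A →ₗ[K] A →ₗ[K] A →ₗ[K] A) (x : Fin 5 → A) (y : Fin 5 → B) :
    leibDefect (TensorProduct.map₂ m MB.mul) (tensorMap₃ b MB.mul₃) (fun i ↦ x i ⊗ₜ y i) =
      leibDefect m b x ⊗ₜ MB.mul₃ (MB.mul (y 0) (y 1)) (y 2) (MB.mul (y 3) (y 4)) := by
  simp only [leibDefect, MultilinearMap.mk'_apply, TensorProduct.map₂_apply_tmul,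
    TensorProduct.map_tmul, leib3_tmul, mul₃_apply, MB.mul_assoc, MB.mul_left_comm,
    TensorProduct.sub_tmul, TensorProduct.add_tmul]

theorem leibDefect_tensorMap₃_eq_zero (MB : CommAssocAlg K B) {m : A →ₗ[K] A →ₗ[K] A}
    {b : A →ₗ[K] A →ₗ[K] A →ₗ[K] A} (hmb : leibDefect m b = 0) :
    leibDefect (TensorProduct.map₂ m MB.mul) (tensorMap₃ b MB.mul₃) = 0 :=
  multilinearMap_ext_tmul fun x y ↦ by simp [MB.leibDefect_tmul, hmb]

end CommAssocAlg

namespace TernaryFM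

variable {K A B : Type*} [Field K] [AddCommGroup A] [Module K A] [AddCommGroup B] [Module K B]

theorem fundDefect_br (TA : TernaryFM K A) : fundDefect TA.br = 0 :=
  MultilinearMap.ext fun x ↦ sub_eq_zero.mpr (TA.fund (x 0) (x 1) (x 2) (x 3) (x 4))

theorem leibDefect_mul_br (TA : TernaryFM K A) : leibDefect TA.mul TA.br = 0 :=
  MultilinearMap.ext fun x ↦ sub_eq_zero.mpr (TA.leib (x 0) (x 1) (x 2) (x 3) (x 4))

/-- The ternary F-manifold algebra `A ⊗ B`, with componentwise product and with bracket
`[x₁ ⊗ y₁, x₂ ⊗ y₂, x₃ ⊗ y₃] = [x₁, x₂, x₃] ⊗ (y₁ · y₂ · y₃)`. -/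
noncomputable def tensor (TA : TernaryFM K A) (MB : CommAssocAlg K B) :
    TernaryFM K (A ⊗[K] B) where
  mul := TensorProduct.map₂ TA.mul MB.mul
  br := tensorMap₃ TA.br MB.mul₃
  mul_comm := tensorMap₂_comm TA.mul_comm MB.mul_comm
  mul_assoc := tensorMap₂_assoc TA.mul_assoc MB.mul_assoc
  br_skew₁₂ := tensorMap₃_skew₁₂ TA.br_skew₁₂ MB.mul₃_swap₁₂
  br_skew₂₃ := tensorMap₃_skew₂₃ TA.br_skew₂₃ MB.mul₃_swap₂₃
  fund x₁ x₂ x₃ x₄ x₅ := sub_eq_zero.mp <|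
    DFunLike.congr_fun (MB.fundDefect_tensorMap₃_eq_zero TA.fundDefect_br) ![x₁, x₂, x₃, x₄, x₅]
  leib x₁ x₂ x₃ x₄ x₅ := sub_eq_zero.mp <|
    DFunLike.congr_fun (MB.leibDefect_tensorMap₃_eq_zero TA.leibDefect_mul_br)
      ![x₁, x₂, x₃, x₄, x₅]

end TernaryFM

theorem stmt1_general {K : Type*} [Field K]
    {A B : Type*} [AddCommGroup A] [Module K A] [AddCommGroup B] [Module K B]
    (TA : TernaryFM K A) (MB : CommAssocAlg K B) :
    ∃ T : TernaryFM K (A ⊗[K] B),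
      (∀ (x1 x2 : A) (y1 y2 : B),
        T.mul (x1 ⊗ₜ[K] y1) (x2 ⊗ₜ[K] y2) = (TA.mul x1 x2) ⊗ₜ[K] (MB.mul y1 y2)) ∧
      (∀ (x1 x2 x3 : A) (y1 y2 y3 : B),
        T.br (x1 ⊗ₜ[K] y1) (x2 ⊗ₜ[K] y2) (x3 ⊗ₜ[K] y3) =
          (TA.br x1 x2 x3) ⊗ₜ[K] (MB.mul (MB.mul y1 y2) y3)) :=
  ⟨TA.tensor MB, fun _ _ _ _ ↦ rfl, fun _ _ _ _ _ _ ↦ rfl⟩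

/-- the tensor product of a ternary F-manifold algebra with a
commutative associative algebra is a ternary F-manifold algebra. -/
theorem stmt1 {K : Type*} [Field K] [CharZero K]
    {A B : Type*} [AddCommGroup A] [Module K A] [AddCommGroup B] [Module K B]
    (TA : TernaryFM K A) (MB : CommAssocAlg K B) :
    ∃ T : TernaryFM K (A ⊗[K] B),
      (∀ (x1 x2 : A) (y1 y2 : B),
        T.mul (x1 ⊗ₜ[K] y1) (x2 ⊗ₜ[K] y2) = (TA.mul x1 x2) ⊗ₜ[K] (MB.mul y1 y2)) ∧
      (∀ (x1 x2 x3 : A) (y1 y2 y3 : B),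
        T.br (x1 ⊗ₜ[K] y1) (x2 ⊗ₜ[K] y2) (x3 ⊗ₜ[K] y3) =
          (TA.br x1 x2 x3) ⊗ₜ[K] (MB.mul (MB.mul y1 y2) y3)) := by
  exact stmt1_general TA MB
end

section
/- Let (A,·,[·,·,·]) be a ternary F-manifold algebra and fix a ∈ A. Define a binary bracket [·,·]_a : A×A → A by [x,y]_a = [x,a,y]. Then (A,·,[·,·]_a) is an F-manifold algebra; in particular [·,·]_a is a Lie bracket on A and the binary Leibnizator of (A,·,[·,·]_a) satisfies the Hertling–Manin relation. -/
open TensorProduct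

section Alternating

variable {R M N : Type*} [CommRing R] [IsDomain R] [NeZero (2 : R)] [AddCommGroup M] [Module R M]
  [AddCommGroup N] [Module R N] [Module.IsTorsionFree R N]

theorem isAlt_of_eq_neg_swap {B : M →ₗ[R] M →ₗ[R] N} (hB : ∀ x y, B x y = -B y x) : B.IsAlt := by
  intro x
  have two_smul_self : (2 : R) • B x x = 0 := by
    rw [two_smul]
    exact eq_neg_iff_add_eq_zero.mp (hB x x)
  exact (smul_eq_zero_iff_right two_ne_zero).mp two_smul_self

end Alternating

/-- The bracket of a 3-Lie algebra. Total skew-symmetry is encoded as vanishing on repeated adjacent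
arguments, which is the right notion over an arbitrary commutative ring. -/
structure IsThreeLieBracket {R A : Type*} [CommRing R] [AddCommGroup A] [Module R A]
    (b : A →ₗ[R] A →ₗ[R] A →ₗ[R] A) : Prop where
  isAlt₁₂ : b.IsAlt
  isAlt₂₃ : ∀ x, (b x).IsAlt
  fund : ∀ x₁ x₂ x₃ x₄ x₅,
    b x₁ x₂ (b x₃ x₄ x₅) = b (b x₁ x₂ x₃) x₄ x₅ + b x₃ (b x₁ x₂ x₄) x₅ + b x₃ x₄ (b x₁ x₂ x₅)

namespace IsThreeLieBracket

variable {R A : Type*} [CommRing R] [AddCommGroup A] [Module R A]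
  {b : A →ₗ[R] A →ₗ[R] A →ₗ[R] A}

theorem isAlt_flip (hb : IsThreeLieBracket b) (a : A) : (b.flip a).IsAlt := by
  intro x
  rw [LinearMap.flip_apply, ← (hb.isAlt₂₃ x).neg, hb.isAlt₁₂.self_eq_zero, LinearMap.zero_apply,
    neg_zero]

-- By the fundamental identity `[x, a, ·]` is a derivation of the ternary bracket, and it kills `a`.
theorem flip_leibniz (hb : IsThreeLieBracket b) (a x y z : A) :
    b.flip a x (b.flip a y z) = b.flip a (b.flip a x y) z + b.flip a y (b.flip a x z) := by
  simp only [LinearMap.flip_apply]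
  rw [hb.fund, (hb.isAlt₂₃ x).self_eq_zero, map_zero, LinearMap.zero_apply, add_zero]

theorem flip_jacobi (hb : IsThreeLieBracket b) (a x y z : A) :
    b.flip a x (b.flip a y z) + b.flip a y (b.flip a z x) + b.flip a z (b.flip a x y) = 0 := by
  have skew := (hb.isAlt_flip a).neg
  rw [hb.flip_leibniz, ← skew x z, ← skew (b.flip a x y) z, map_neg]
  abel

end IsThreeLieBracket

theorem leib2_flip {K A : Type*} [Field K] [AddCommGroup A] [Module K A]
    (m : A →ₗ[K] A →ₗ[K] A) (b : A →ₗ[K] A →ₗ[K] A →ₗ[K] A) (a x y z : A) :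
    leib2 m (b.flip a) x y z = leib3 m b x a y z :=
  sub_right_comm _ _ _

namespace TernaryFM

variable {K A : Type*} [Field K] [NeZero (2 : K)] [AddCommGroup A] [Module K A]

theorem isThreeLieBracket_br (T : TernaryFM K A) : IsThreeLieBracket T.br where
  isAlt₁₂ := isAlt_of_eq_neg_swap fun x y => LinearMap.ext (T.br_skew₁₂ x y)
  isAlt₂₃ x := isAlt_of_eq_neg_swap (T.br_skew₂₃ x)
  fund := T.fund

/-- The F-manifold algebra obtained from a ternary one by fixing the middle argument of the bracket:
`[x, y]_a = [x, a, y]`. -/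
def contract (T : TernaryFM K A) (a : A) : FManifoldAlg K A where
  mul := T.mul
  br := T.br.flip a
  mul_comm := T.mul_comm
  mul_assoc := T.mul_assoc
  br_skew x y := ((T.isThreeLieBracket_br.isAlt_flip a).neg y x).symm
  jacobi := T.isThreeLieBracket_br.flip_jacobi a
  hm x y z w := by
    simp only [leib2_flip]
    exact T.leib x y a z w

end TernaryFM

theorem stmt2_general {K : Type*} [Field K] [NeZero (2 : K)] {A : Type*} [AddCommGroup A]
    [Module K A] (T : TernaryFM K A) (a : A) :
    ∃ F : FManifoldAlg K A, F.mul = T.mul ∧ ∀ x y, F.br x y = T.br x a y :=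
  ⟨T.contract a, rfl, fun _ _ => rfl⟩

/-- fixing `a`, the bracket `[x,y]_a = [x,a,y]` together with the
product makes `A` an F-manifold algebra. -/
theorem stmt2 {K : Type*} [Field K] [CharZero K] {A : Type*} [AddCommGroup A] [Module K A]
    (T : TernaryFM K A) (a : A) :
    ∃ F : FManifoldAlg K A, F.mul = T.mul ∧ ∀ x y, F.br x y = T.br x a y :=
  stmt2_general T a
end

section
/- Let (A,·,[·,·,·]) be a ternary F-manifold algebra and (V;ρ,μ) a representation of A. Define L3(x,y,z,u) = ρ(x,y)μ(z)u + ρ(x,z)μ(y)u − ρ(x,y·z)u. Assume the additional conditions: L1(x·y,z,t,u) = L1(y,z,t,μ(x)u) + L1(x,z,t,μ(y)u); L3(x·y,z,t,u) = −L3(y,z,t,μ(x)u) − L3(x,z,t,μ(y)u); and μ(L(x,y,z,t))u = L3(y,z,t,μ(x)u) − μ(x)L3(y,z,t,u), for all x,y,z,t ∈ A and u ∈ V. Then (V*; ρ*, −μ*) is a representation of the ternary F-manifold algebra A, where V* is the linear dual of V, ⟨ρ*(x,y)ξ, v⟩ = −⟨ξ, ρ(x,y)v⟩ and ⟨μ*(x)ξ,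 v⟩ = −⟨ξ, μ(x)v⟩ for all ξ ∈ V*, v ∈ V. -/
open TensorProduct

/-!
Pairing with `V` turns `L1` of the dual into the transpose of `L1`, and `L2` of the dual into minus
the transpose of `L3`, so the dual is a representation once `L1` and `L3` obey the Leibniz rules
with `μ` acting on the right and `μ(L(x,y,z,t)) = [L3(y,z,t), μ(x)]`.

The Leibniz rules are obtained from those with `μ` acting on the left. For `L3` the two differ by
`μ(L(x,y,z,t) + L(y,x,z,t)) = 0`. For `L1` they agree because `μ` commutes with `L1`: comparing the
commutator identities for `L2` and for `L3 = L2 + L1(y,z,t) + L1(y,t,z)` shows that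
`[L1(y,z,t), μ(x)]` is skew in `z, t`, and it is symmetric in `t, x`, so it vanishes away from
characteristic two.
-/

theorem eq_zero_of_skew_of_symm (K : Type*) [Field K] [NeZero (2 : K)] {α M : Type*}
    [AddCommGroup M] [Module K M] {f : α → α → α → M} (hskew : ∀ a b c, f a b c = -f b a c)
    (hsymm : ∀ a b c, f a b c = f a c b) (a b c : α) : f a b c = 0 := by
  have self_eq_neg : f a b c = -f a b c := calc
    f a b c = -f b c a := by rw [hskew, hsymm]
    _ = f c a b := by rw [hskew, neg_neg, hsymm]
    _ = -f a b c := by rw [hskew, hsymm]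
  have two_smul_eq_zero : (2 : K) • f a b c = 0 := by
    rw [two_smul]
    exact eq_neg_iff_add_eq_zero.mp self_eq_neg
  exact (smul_eq_zero.mp two_smul_eq_zero).resolve_left two_ne_zero

section Dual

variable {K : Type*} [Field K] {A V : Type*} [AddCommGroup A] [Module K A]
  [AddCommGroup V] [Module K V]

/-- The paper's `ρ*` on `V*`: minus the transpose of `ρ(x,y)`. -/
def dualBracketAction (ρ : A →ₗ[K] A →ₗ[K] V →ₗ[K] V) :
    A →ₗ[K] A →ₗ[K] (V →ₗ[K] K) →ₗ[K] (V →ₗ[K] K) :=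
  (-ρ).compr₂ Module.Dual.transpose

/-- The paper's `−μ*` on `V*`: the transpose of `μ(x)`, the two signs having cancelled. -/
def dualMulAction (μ : A →ₗ[K] V →ₗ[K] V) : A →ₗ[K] (V →ₗ[K] K) →ₗ[K] (V →ₗ[K] K) :=
  Module.Dual.transpose ∘ₗ μ

theorem dualBracketAction_apply (ρ : A →ₗ[K] A →ₗ[K] V →ₗ[K] V) (x y : A) (ξ : V →ₗ[K] K)
    (v : V) : dualBracketAction ρ x y ξ v = -ξ (ρ x y v) :=
  map_neg ξ (ρ x y v)

theorem dualMulAction_apply (μ : A →ₗ[K] V →ₗ[K] V) (x : A) (ξ : V →ₗ[K] K) (v : V) :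
    dualMulAction μ x ξ v = ξ (μ x v) :=
  rfl

variable {T : TernaryFM K A} {ρ : A →ₗ[K] A →ₗ[K] V →ₗ[K] V} {μ : A →ₗ[K] V →ₗ[K] V}

namespace TernaryFM

theorem br_rotate (T : TernaryFM K A) (x y z : A) : T.br y z x = T.br x y z := by
  rw [T.br_skew₂₃ y z x, T.br_skew₁₂ y x z, neg_neg]

theorem leib3_swap (T : TernaryFM K A) (x y z t : A) :
    leib3 T.mul T.br y x z t = -leib3 T.mul T.br x y z t := by
  simp only [leib3, T.br_skew₁₂ y x, map_neg, LinearMap.neg_apply]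
  abel

end TernaryFM

namespace Is3LieRep

theorem skew_apply (h : Is3LieRep T ρ) (x y : A) (v : V) : ρ x y v = -ρ y x v :=
  LinearMap.congr_fun (h.1 x y) v

theorem commutator_apply (h : Is3LieRep T ρ) (x₁ x₂ x₃ x₄ : A) (v : V) :
    ρ x₁ x₂ (ρ x₃ x₄ v) - ρ x₃ x₄ (ρ x₁ x₂ v) =
      ρ (T.br x₁ x₂ x₃) x₄ v - ρ (T.br x₁ x₂ x₄) x₃ v :=
  LinearMap.congr_fun (h.2.1 x₁ x₂ x₃ x₄) v

theorem br_apply (h : Is3LieRep T ρ) (x₁ x₂ x₃ x₄ : A) (v : V) :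
    ρ (T.br x₁ x₂ x₃) x₄ v =
      ρ x₁ x₂ (ρ x₃ x₄ v) + ρ x₂ x₃ (ρ x₁ x₄ v) + ρ x₃ x₁ (ρ x₂ x₄ v) :=
  LinearMap.congr_fun (h.2.2 x₁ x₂ x₃ x₄) v

theorem sum_commutator_apply (h : Is3LieRep T ρ) (x₁ x₂ x₃ x₄ : A) (v : V) :
    (ρ x₁ x₂ (ρ x₃ x₄ v) - ρ x₃ x₄ (ρ x₁ x₂ v)) +
        (ρ x₂ x₃ (ρ x₁ x₄ v) - ρ x₁ x₄ (ρ x₂ x₃ v)) +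
        (ρ x₃ x₁ (ρ x₂ x₄ v) - ρ x₂ x₄ (ρ x₃ x₁ v)) =
      (2 : K) • ρ (T.br x₁ x₂ x₃) x₄ v := by
  have comm₁₂ : ρ x₁ x₂ (ρ x₃ x₄ v) - ρ x₃ x₄ (ρ x₁ x₂ v) =
      ρ (T.br x₃ x₁ x₄) x₂ v + ρ (T.br x₂ x₃ x₄) x₁ v := by
    rw [← neg_sub, h.commutator_apply x₃ x₄ x₁ x₂ v, T.br_skew₂₃ x₃ x₄ x₁, T.br_rotate x₂ x₃ x₄]
    simp only [map_neg, LinearMap.neg_apply]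
    abel
  rw [comm₁₂, h.commutator_apply x₂ x₃ x₁ x₄ v, h.commutator_apply x₃ x₁ x₂ x₄ v,
    T.br_rotate x₁ x₂ x₃, ← T.br_rotate x₃ x₁ x₂]
  module

theorem neg_br_apply (h : Is3LieRep T ρ) (x₁ x₂ x₃ x₄ : A) (v : V) :
    -ρ (T.br x₁ x₂ x₃) x₄ v =
      ρ x₃ x₄ (ρ x₁ x₂ v) + ρ x₁ x₄ (ρ x₂ x₃ v) + ρ x₂ x₄ (ρ x₃ x₁ v) := by
  linear_combination (norm := module)
    h.br_apply x₁ x₂ x₃ x₄ v + h.sum_commutator_apply x₁ x₂ x₃ x₄ v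

theorem dual (h : Is3LieRep T ρ) : Is3LieRep T (dualBracketAction ρ) := by
  refine ⟨fun x y ↦ ?skew, fun x₁ x₂ x₃ x₄ ↦ ?commutator, fun x₁ x₂ x₃ x₄ ↦ ?br⟩ <;> ext ξ v <;>
    simp only [LinearMap.add_apply, LinearMap.sub_apply, LinearMap.neg_apply,
      LinearMap.comp_apply, dualBracketAction_apply, neg_neg]
  case skew => rw [h.skew_apply, map_neg, neg_neg]
  case commutator =>
    have := congrArg ξ (h.commutator_apply x₁ x₂ x₃ x₄ v)
    simp only [map_sub] at this
    linear_combination -this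
  case br => simpa only [map_add, map_neg] using congrArg ξ (h.neg_br_apply x₁ x₂ x₃ x₄ v)

end Is3LieRep

namespace IsAssocRep

theorem mul_apply (h : IsAssocRep T μ) (x y : A) (v : V) : μ (T.mul x y) v = μ x (μ y v) :=
  LinearMap.congr_fun (h x y) v

theorem apply_comm (h : IsAssocRep T μ) (x y : A) (v : V) : μ x (μ y v) = μ y (μ x v) := by
  rw [← h.mul_apply, T.mul_comm, h.mul_apply]

theorem dual (h : IsAssocRep T μ) : IsAssocRep T (dualMulAction μ) := by
  intro x y
  ext ξ v
  simp only [LinearMap.comp_apply, dualMulAction_apply, h.mul_apply, h.apply_comm x y]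

theorem L1_commutator_symm (h : IsAssocRep T μ) (x y z t : A) (u : V) :
    L1 T ρ μ x y z (μ t u) - μ t (L1 T ρ μ x y z u) =
      L1 T ρ μ x y t (μ z u) - μ z (L1 T ρ μ x y t u) := by
  simp only [L1, map_sub, h.apply_comm t z, h.apply_comm _ (T.br x y z),
    h.apply_comm _ (T.br x y t)]
  abel

end IsAssocRep

theorem L1_dual_apply (x y z : A) (ξ : V →ₗ[K] K) (v : V) :
    L1 T (dualBracketAction ρ) (dualMulAction μ) x y z ξ v = ξ (L1 T ρ μ x y z v) := by
  simp only [L1, LinearMap.sub_apply, dualBracketAction_apply, dualMulAction_apply, map_sub]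
  ring

theorem L2_dual_apply (x y z : A) (ξ : V →ₗ[K] K) (v : V) :
    L2 T (dualBracketAction ρ) (dualMulAction μ) x y z ξ v = -ξ (L3 T ρ μ x y z v) := by
  simp only [L2, L3, LinearMap.sub_apply, LinearMap.add_apply, dualBracketAction_apply,
    dualMulAction_apply, map_sub, map_add]
  ring

theorem L3_eq_L2_add_L1_add_L1 (x y z : A) (u : V) :
    L3 T ρ μ x y z u = L2 T ρ μ x y z u + L1 T ρ μ x y z u + L1 T ρ μ x z y u := by
  simp only [L1, L2, L3, T.br_skew₂₃ x z y, map_neg, LinearMap.neg_apply]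
  abel

theorem isFMRep_dual (hρ : Is3LieRep T ρ) (hμ : IsAssocRep T μ)
    (hL1 : ∀ x y z t u, L1 T ρ μ (T.mul x y) z t u =
      L1 T ρ μ y z t (μ x u) + L1 T ρ μ x z t (μ y u))
    (hL3 : ∀ x y z t u, L3 T ρ μ (T.mul x y) z t u =
      L3 T ρ μ y z t (μ x u) + L3 T ρ μ x z t (μ y u))
    (hleib : ∀ x y z t u, μ (leib3 T.mul T.br x y z t) u =
      L3 T ρ μ y z t (μ x u) - μ x (L3 T ρ μ y z t u)) :
    IsFMRep T (dualBracketAction ρ) (dualMulAction μ) := by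
  refine ⟨hρ.dual, hμ.dual, ?_, ?_, ?_⟩ <;> intro x y z t ξ <;> ext v <;>
    simp only [LinearMap.add_apply, LinearMap.sub_apply, dualMulAction_apply, L1_dual_apply,
      L2_dual_apply]
  · rw [hL1, map_add]
  · rw [hL3, map_add, neg_add]
  · rw [hleib, map_sub]
    ring

namespace IsFMRep

theorem L3_mul (h : IsFMRep T ρ μ) (x y z t : A) (u : V) :
    L3 T ρ μ (T.mul x y) z t u = μ x (L3 T ρ μ y z t u) + μ y (L3 T ρ μ x z t u) := by
  obtain ⟨-, -, L1_mul, L2_mul, -⟩ := h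
  simp only [L3_eq_L2_add_L1_add_L1, L1_mul, L2_mul, map_add]
  abel

theorem L3_mul_right (h : IsFMRep T ρ μ)
    (hleib : ∀ x y z t u, μ (leib3 T.mul T.br x y z t) u =
      L3 T ρ μ y z t (μ x u) - μ x (L3 T ρ μ y z t u)) (x y z t : A) (u : V) :
    L3 T ρ μ (T.mul x y) z t u = L3 T ρ μ y z t (μ x u) + L3 T ρ μ x z t (μ y u) := by
  have leib_swap : μ (leib3 T.mul T.br y x z t) u = -μ (leib3 T.mul T.br x y z t) u := by
    rw [T.leib3_swap, map_neg, LinearMap.neg_apply]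
  rw [hleib, hleib] at leib_swap
  rw [h.L3_mul]
  linear_combination (norm := module) -leib_swap

theorem L1_commutator_skew (h : IsFMRep T ρ μ)
    (hleib : ∀ x y z t u, μ (leib3 T.mul T.br x y z t) u =
      L3 T ρ μ y z t (μ x u) - μ x (L3 T ρ μ y z t u)) (x y z t : A) (u : V) :
    L1 T ρ μ x y z (μ t u) - μ t (L1 T ρ μ x y z u) =
      -(L1 T ρ μ x z y (μ t u) - μ t (L1 T ρ μ x z y u)) := by
  obtain ⟨-, -, -, -, leib_eq_L2_commutator⟩ := h
  have L2_commutator_eq_L3_commutator :=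
    (leib_eq_L2_commutator t x y z u).symm.trans (hleib t x y z u)
  simp only [L3_eq_L2_add_L1_add_L1, map_add] at L2_commutator_eq_L3_commutator
  linear_combination (norm := module) -L2_commutator_eq_L3_commutator

theorem L1_apply_mul_comm [NeZero (2 : K)] (h : IsFMRep T ρ μ)
    (hleib : ∀ x y z t u, μ (leib3 T.mul T.br x y z t) u =
      L3 T ρ μ y z t (μ x u) - μ x (L3 T ρ μ y z t u)) (x y z t : A) (u : V) :
    L1 T ρ μ x y z (μ t u) = μ t (L1 T ρ μ x y z u) :=
  sub_eq_zero.mp <| eq_zero_of_skew_of_symm K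
    (f := fun y z t ↦ L1 T ρ μ x y z (μ t u) - μ t (L1 T ρ μ x y z u))
    (fun y z t ↦ h.L1_commutator_skew hleib x y z t u)
    (fun y z t ↦ h.2.1.L1_commutator_symm x y z t u) y z t

theorem L1_mul_right [NeZero (2 : K)] (h : IsFMRep T ρ μ)
    (hleib : ∀ x y z t u, μ (leib3 T.mul T.br x y z t) u =
      L3 T ρ μ y z t (μ x u) - μ x (L3 T ρ μ y z t u)) (x y z t : A) (u : V) :
    L1 T ρ μ (T.mul x y) z t u = L1 T ρ μ y z t (μ x u) + L1 T ρ μ x z t (μ y u) := by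
  rw [h.2.2.1, h.L1_apply_mul_comm hleib, h.L1_apply_mul_comm hleib]

end IsFMRep

theorem stmt6_general [NeZero (2 : K)] (h : IsFMRep T ρ μ)
    (hleib : ∀ x y z t u, μ (leib3 T.mul T.br x y z t) u =
      L3 T ρ μ y z t (μ x u) - μ x (L3 T ρ μ y z t u)) :
    IsFMRep T (dualBracketAction ρ) (dualMulAction μ) :=
  isFMRep_dual h.1 h.2.1 (h.L1_mul_right hleib) (h.L3_mul_right hleib) hleib

end Dual

/-- under the additional conditions involving `L1` and `L3`,
the dual `(V*; ρ*, −μ*)` is a representation of the ternary F-manifold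
algebra `A`. -/
theorem stmt6 {K : Type*} [Field K] [CharZero K]
    {A V : Type*} [AddCommGroup A] [Module K A] [AddCommGroup V] [Module K V]
    (T : TernaryFM K A) (ρ : A →ₗ[K] A →ₗ[K] V →ₗ[K] V) (μ : A →ₗ[K] V →ₗ[K] V)
    (hrep : IsFMRep T ρ μ)
    (h1 : ∀ x y z t u, L1 T ρ μ (T.mul x y) z t u =
      L1 T ρ μ y z t (μ x u) + L1 T ρ μ x z t (μ y u))
    (h2 : ∀ x y z t u, L3 T ρ μ (T.mul x y) z t u =
      - L3 T ρ μ y z t (μ x u) - L3 T ρ μ x z t (μ y u))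
    (h3 : ∀ x y z t u, μ (leib3 T.mul T.br x y z t) u =
      L3 T ρ μ y z t (μ x u) - μ x (L3 T ρ μ y z t u)) :
    ∃ (ρd : A →ₗ[K] A →ₗ[K] (V →ₗ[K] K) →ₗ[K] (V →ₗ[K] K))
      (μd : A →ₗ[K] (V →ₗ[K] K) →ₗ[K] (V →ₗ[K] K)),
      (∀ (x y : A) (ξ : V →ₗ[K] K) (v : V), ρd x y ξ v = - ξ (ρ x y v)) ∧
      (∀ (x : A) (ξ : V →ₗ[K] K) (v : V), μd x ξ v = ξ (μ x v)) ∧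
      IsFMRep T ρd μd := by
  exact ⟨dualBracketAction ρ, dualMulAction μ, dualBracketAction_apply ρ, dualMulAction_apply μ,
    stmt6_general hrep h3⟩
end

section
/- Let (A,⋄,{·,·,·}) be a ternary pre-F-manifold algebra. Then (A,·,[·,·,·]) is a ternary F-manifold algebra, where x·y = x⋄y + y⋄x and [x,y,z] = {x,y,z} + {y,z,x} + {z,x,y}. (This is called the sub-adjacent ternary F-manifold algebra of (A,⋄,{·,·,·}).) -/
open TensorProduct

/-!
Write `D x = x ⋄ _` and `T x y = {x, y, _}`. The Zinbiel identity says `D x ∘ D y = D (x · y)`, so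
the operators `D x` commute. Since `T (x · y) z = F2 z x y + D x ∘ T y z + D y ∘ T x z`, the
identity for `F1` is equivalent to `D (L w z x y) = D w ∘ F2 z x y - F2 z x y ∘ D w`. On the other
hand `L x y z w = F1 x y z w + F1 x y w z + F2 x z w y - F2 y z w x`, and the identities for `F1`
and `F2` expand every summand of `L (x · y) z w u` except `F2 z w u (x · y)`, where the formula for
`D (L ..)` supplies the terms `L y z w u ⋄ x` and `L x z w u ⋄ y`.
-/

section SubAdjacent

variable {K : Type*} [Field K] {A : Type*} [AddCommGroup A] [Module K A]
  {d : A →ₗ[K] A →ₗ[K] A} {t : A →ₗ[K] A →ₗ[K] A →ₗ[K] A}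

/-- The symmetrized product `sym d`, bundled as a bilinear map so that it can serve as the product
of a `TernaryFM`. -/
def symLin (d : A →ₗ[K] A →ₗ[K] A) : A →ₗ[K] A →ₗ[K] A := d + d.flip

/-- The cyclic bracket `cbr t`, bundled as a trilinear map so that it can serve as the bracket of a
`TernaryFM`; the last two summands are `t` with its arguments rotated. -/
def cbrLin (t : A →ₗ[K] A →ₗ[K] A →ₗ[K] A) : A →ₗ[K] A →ₗ[K] A →ₗ[K] A :=
  t + (LinearMap.lflip.toLinearMap ∘ₗ t).flip + LinearMap.lflip.toLinearMap ∘ₗ t.flip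

theorem symLin_apply (d : A →ₗ[K] A →ₗ[K] A) (x y : A) : symLin d x y = sym d x y := rfl

theorem cbrLin_apply (t : A →ₗ[K] A →ₗ[K] A →ₗ[K] A) (x y z : A) :
    cbrLin t x y z = cbr t x y z := rfl

/-- The Zinbiel identity for a bilinear product, as a predicate on the product. -/
def IsZinbiel (d : A →ₗ[K] A →ₗ[K] A) : Prop :=
  ∀ x y z, d x (d y z) = d (d y x) z + d (d x y) z

theorem sym_comm (d : A →ₗ[K] A →ₗ[K] A) (x y : A) : sym d x y = sym d y x :=
  add_comm _ _

theorem IsZinbiel.apply_sym (hd : IsZinbiel d) (x y z : A) : d (sym d x y) z = d x (d y z) := by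
  rw [hd x y z, sym, map_add, LinearMap.add_apply, add_comm]

theorem IsZinbiel.left_comm (hd : IsZinbiel d) (x y z : A) : d x (d y z) = d y (d x z) := by
  rw [← hd.apply_sym, sym_comm, hd.apply_sym]

theorem IsZinbiel.sym_assoc (hd : IsZinbiel d) (x y z : A) :
    sym d (sym d x y) z = sym d x (sym d y z) :=
  calc sym d (sym d x y) z
      = d x (d y z) + d z (d x y + d y x) := congrArg (· + _) (hd.apply_sym x y z)
    _ = d x (d y z + d z y) + d y (d z x) := by
      rw [map_add, map_add, hd.left_comm z x, hd.left_comm z y, add_assoc]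
    _ = sym d x (sym d y z) := congrArg (_ + ·) (hd.apply_sym y z x).symm

theorem cbr_rotate (t : A →ₗ[K] A →ₗ[K] A →ₗ[K] A) (x y z : A) : cbr t x y z = cbr t y z x := by
  simp only [cbr]
  abel

theorem cbr_skew₁₂ (ht : ∀ x y z, t x y z = -t y x z) (x y z : A) :
    cbr t x y z = -cbr t y x z := by
  simp only [cbr, ht x y z, ht y z x, ht z x y]
  abel

theorem cbr_skew₂₃ (ht : ∀ x y z, t x y z = -t y x z) (x y z : A) :
    cbr t x y z = -cbr t x z y := by
  rw [cbr_rotate t x y z, cbr_skew₁₂ ht y z x, ← cbr_rotate t x z y]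

theorem ThreePreLie.tri_cbr (Q : ThreePreLie K A) (x y z u v : A) :
    Q.tri x y (cbr Q.tri z u v) =
      Q.tri (cbr Q.tri x y z) u v + Q.tri z (cbr Q.tri x y u) v + Q.tri z u (Q.tri x y v) +
      (Q.tri (cbr Q.tri x y u) v z + Q.tri u (cbr Q.tri x y v) z + Q.tri u v (Q.tri x y z)) +
      (Q.tri (cbr Q.tri x y v) z u + Q.tri v (cbr Q.tri x y z) u + Q.tri v z (Q.tri x y u)) := by
  rw [← Q.preLie₁, ← Q.preLie₁, ← Q.preLie₁, ← map_add, ← map_add, cbr]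

theorem ThreePreLie.tri_cbr_middle_add_tri_cbr_left (Q : ThreePreLie K A) (x y z u v : A) :
    Q.tri y (cbr Q.tri z u v) x + Q.tri (cbr Q.tri z u v) x y =
      Q.tri z u (Q.tri y v x + Q.tri v x y) + Q.tri u v (Q.tri y z x + Q.tri z x y) +
        Q.tri v z (Q.tri y u x + Q.tri u x y) := by
  rw [Q.tri_skew y (cbr Q.tri z u v) x, Q.preLie₂ z u v y x, Q.preLie₂ z u v x y,
    Q.tri_skew y v x, Q.tri_skew y z x, Q.tri_skew y u x]
  simp only [map_add, map_neg]
  abel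

theorem ThreePreLie.cbr_fund (Q : ThreePreLie K A) (x y z u v : A) :
    cbr Q.tri x y (cbr Q.tri z u v) =
      cbr Q.tri (cbr Q.tri x y z) u v + cbr Q.tri z (cbr Q.tri x y u) v +
        cbr Q.tri z u (cbr Q.tri x y v) := by
  have tri_right : ∀ p q r, Q.tri p q (cbr Q.tri x y r) =
      Q.tri p q (Q.tri x y r) + Q.tri p q (Q.tri y r x + Q.tri r x y) := fun p q r => by
    rw [← map_add, ← add_assoc, cbr]
  calc cbr Q.tri x y (cbr Q.tri z u v)
      = Q.tri x y (cbr Q.tri z u v) +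
          (Q.tri y (cbr Q.tri z u v) x + Q.tri (cbr Q.tri z u v) x y) := add_assoc _ _ _
    _ = _ := by
      rw [Q.tri_cbr, Q.tri_cbr_middle_add_tri_cbr_left, cbr.eq_def _ (cbr Q.tri x y z) u v,
        cbr.eq_def _ z (cbr Q.tri x y u) v, cbr.eq_def _ z u (cbr Q.tri x y v), tri_right u v z,
        tri_right v z u, tri_right z u v]
      abel

theorem Lpre_eq_F1_add_F1_add_F2_sub_F2 (ht : ∀ x y z, t x y z = -t y x z) (x y z w : A) :
    Lpre d t x y z w = F1 d t x y z w + F1 d t x y w z + F2 d t x z w y - F2 d t y z w x := by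
  simp only [Lpre, F1, F2, cbr, sym, map_add, LinearMap.add_apply, ht z x, ht w x, ht (d _ _) x,
    map_neg]
  abel

theorem tri_sym_left (ht : ∀ x y z, t x y z = -t y x z) (x y z u : A) :
    t (sym d x y) z u = F2 d t z x y u + d x (t y z u) + d y (t x z u) := by
  rw [F2, ht (sym d x y), ht y z, ht x z, map_neg, map_neg]
  abel

theorem cbr_sym_left (ht : ∀ x y z, t x y z = -t y x z) (x y z w : A) :
    cbr t (sym d x y) z w = sym d x (cbr t y z w) + sym d y (cbr t x z w) - Lpre d t w z x y := by
  have cbr_reverse : ∀ a, cbr t a z w = -cbr t w z a := fun a => by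
    rw [cbr_skew₂₃ ht, cbr_rotate]
  simp only [Lpre, cbr_reverse, sym, map_neg, LinearMap.neg_apply]
  abel

theorem IsZinbiel.F1_sym_left (hd : IsZinbiel d) (ht : ∀ x y z, t x y z = -t y x z)
    (x y z w u : A) :
    F1 d t (sym d x y) z w u = d x (F1 d t y z w u) + d y (F1 d t x z w u) +
      (d (Lpre d t w z x y) u - (d w (F2 d t z x y u) - F2 d t z x y (d w u))) := by
  simp only [F1, tri_sym_left ht, cbr_sym_left ht, map_add, map_sub, LinearMap.add_apply,
    LinearMap.sub_apply, hd.apply_sym, hd.left_comm w x, hd.left_comm w y]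
  abel

/-- The right-hand side is the negative of the one in `TernaryPreFM.pf3`. -/
theorem IsZinbiel.apply_Lpre (hd : IsZinbiel d) (ht : ∀ x y z, t x y z = -t y x z)
    (hF1 : ∀ x y z w u,
      F1 d t (sym d x y) z w u = d x (F1 d t y z w u) + d y (F1 d t x z w u))
    (w z x y u : A) :
    d (Lpre d t w z x y) u = d w (F2 d t z x y u) - F2 d t z x y (d w u) :=
  sub_eq_zero.mp (left_eq_add.mp ((hF1 x y z w u).symm.trans (hd.F1_sym_left ht x y z w u)))

theorem F2_add_right (x y z u v : A) :
    F2 d t x y z (u + v) = F2 d t x y z u + F2 d t x y z v := by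
  simp only [F2, map_add]
  abel

theorem IsZinbiel.Lpre_sym_left (hd : IsZinbiel d) (ht : ∀ x y z, t x y z = -t y x z)
    (hF1 : ∀ x y z w u,
      F1 d t (sym d x y) z w u = d x (F1 d t y z w u) + d y (F1 d t x z w u))
    (hF2 : ∀ x y z w u,
      F2 d t (sym d x y) z w u = d x (F2 d t y z w u) + d y (F2 d t x z w u))
    (x y z w u : A) :
    Lpre d t (sym d x y) z w u = sym d x (Lpre d t y z w u) + sym d y (Lpre d t x z w u) := by
  have dia_Lpre : ∀ a b, d a (Lpre d t b z w u) =
      d a (F1 d t b z w u) + d a (F1 d t b z u w) + d a (F2 d t b w u z) -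
        d a (F2 d t z w u b) := fun a b => by
    rw [Lpre_eq_F1_add_F1_add_F2_sub_F2 ht, map_sub, map_add, map_add]
  have F2_sym : F2 d t z w u (sym d x y) = F2 d t z w u (d x y) + F2 d t z w u (d y x) :=
    F2_add_right ..
  rw [Lpre_eq_F1_add_F1_add_F2_sub_F2 ht, hF1, hF1, hF2, F2_sym, sym, sym, dia_Lpre, dia_Lpre,
    hd.apply_Lpre ht hF1, hd.apply_Lpre ht hF1]
  abel

end SubAdjacent

theorem stmt8_general {K : Type*} [Field K] {A : Type*} [AddCommGroup A] [Module K A]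
    {d : A →ₗ[K] A →ₗ[K] A} (hd : IsZinbiel d) (Q : ThreePreLie K A)
    (hF1 : ∀ x y z w u, F1 d Q.tri (sym d x y) z w u =
      d x (F1 d Q.tri y z w u) + d y (F1 d Q.tri x z w u))
    (hF2 : ∀ x y z w u, F2 d Q.tri (sym d x y) z w u =
      d x (F2 d Q.tri y z w u) + d y (F2 d Q.tri x z w u)) :
    ∃ T : TernaryFM K A,
      (∀ x y, T.mul x y = sym d x y) ∧
      (∀ x y z, T.br x y z = cbr Q.tri x y z) :=
  ⟨{  mul := symLin d
      br := cbrLin Q.tri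
      mul_comm := sym_comm d
      mul_assoc := hd.sym_assoc
      br_skew₁₂ := cbr_skew₁₂ Q.tri_skew
      br_skew₂₃ := cbr_skew₂₃ Q.tri_skew
      fund := Q.cbr_fund
      leib := hd.Lpre_sym_left Q.tri_skew hF1 hF2 },
    symLin_apply d, cbrLin_apply Q.tri⟩

/-- a ternary pre-F-manifold algebra gives a sub-adjacent ternary
F-manifold algebra via `x·y = x⋄y + y⋄x`, `[x,y,z] = {x,y,z}+{y,z,x}+{z,x,y}`. -/
theorem stmt8 {K : Type*} [Field K] [CharZero K]
    {A : Type*} [AddCommGroup A] [Module K A] (P : TernaryPreFM K A) :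
    ∃ T : TernaryFM K A,
      (∀ x y, T.mul x y = sym P.dia x y) ∧
      (∀ x y z, T.br x y z = cbr P.tri x y z) :=
  stmt8_general P.zinbiel ⟨P.tri, P.tri_skew, P.preLie₁, P.preLie₂⟩ P.pf1 P.pf2
end

section
/- Let (A,·) be a commutative associative algebra over K, let μ : A → End(V) be a representation of (A,·) (i.e. μ is linear with μ(x·y) = μ(x)μ(y)), and let T : V → A be a linear map satisfying Tu·Tv = T(μ(Tu)v + μ(Tv)u) for all u,v ∈ V (a relative Rota–Baxter operator). Then the operation u⋄v = μ(Tu)v makes V a Zinbiel algebra, i.e. u⋄(v⋄w) = (v⋄u)⋄w + (u⋄v)⋄w for all u,v,w ∈ V. -/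
open TensorProduct

theorem stmt11_general {R A V : Type*} [CommSemiring R] [AddCommMonoid A] [Module R A]
    [AddCommMonoid V] [Module R V]
    (m : A →ₗ[R] A →ₗ[R] A)
    (μ : A →ₗ[R] V →ₗ[R] V) (hμ : ∀ x y, μ (m x y) = μ x ∘ₗ μ y)
    (T : V →ₗ[R] A)
    (hT : ∀ u v, m (T u) (T v) = T (μ (T u) v + μ (T v) u)) (u v w : V) :
    μ (T u) (μ (T v) w) = μ (T (μ (T v) u)) w + μ (T (μ (T u) v)) w :=
  calc
    μ (T u) (μ (T v) w) = μ (m (T u) (T v)) w := by rw [hμ, LinearMap.comp_apply]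
    _ = μ (T (μ (T u) v + μ (T v) u)) w := by rw [hT]
    _ = μ (T (μ (T u) v)) w + μ (T (μ (T v) u)) w := by simp only [map_add, LinearMap.add_apply]
    _ = μ (T (μ (T v) u)) w + μ (T (μ (T u) v)) w := add_comm _ _

/-- a relative Rota–Baxter operator on a commutative associative
algebra induces a Zinbiel structure `u ⋄ v = μ(Tu)v`. -/
theorem stmt11 {K : Type*} [Field K] [CharZero K]
    {A V : Type*} [AddCommGroup A] [Module K A] [AddCommGroup V] [Module K V]
    (m : A →ₗ[K] A →ₗ[K] A)
    (hcomm : ∀ x y, m x y = m y x)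
    (hassoc : ∀ x y z, m (m x y) z = m x (m y z))
    (μ : A →ₗ[K] V →ₗ[K] V) (hμ : ∀ x y, μ (m x y) = μ x ∘ₗ μ y)
    (Tm : V →ₗ[K] A)
    (hrb : ∀ u v, m (Tm u) (Tm v) = Tm (μ (Tm u) v + μ (Tm v) u)) :
    ∀ u v w, μ (Tm u) (μ (Tm v) w) =
      μ (Tm (μ (Tm v) u)) w + μ (Tm (μ (Tm u) v)) w := by
  exact stmt11_general m μ hμ Tm hrb
end
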